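/- arXiv:2505.03429 — 12 statements merged into one kernel-verified Lean document; each statement's English description precedes it below -/
import Mathlib

section
/- Let U ⊆ ℂ be open and let A : U → Mat₂(ℂ) be a twice differentiable matrix-valued function with tr A(x) = 0 and A₁₂(x) ≠ 0 for all x ∈ U, and let h : U → ℂ be a twice differentiable function with h(x)² = A₁₂(x) and h(x) ≠ 0 on U. Define g(x) = [[h(x), 0],[0, h(x)⁻¹]] · [[1, 0],[A₁₂′(x)/(2A₁₂(x)) − A₁₁(x), 1]]. Then g(x) is invertible for every x ∈ U and g(x)⁻¹·(A(x)·g(x) − g′(x)) = [[0, 1],[Q(x), 0]], where Q(x) = −det A(x) + A₁₁′(x) − A₁₁(x)·A₁₂′(x)/A₁₂(x) + (3/4)·(A₁₂′(x)/A₁₂(x))² − A₁₂″(x)/(2A₁₂(x)). -/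
/- Singular gauge transformation bringing a trace-free 2×2 first-order system
   d/dx − A(x) into oper (companion) form d/dx − [[0,1],[Q(x),0]]. -/
theorem stmt0
    (U : Set ℂ) (hU : IsOpen U)
    (A : ℂ → Matrix (Fin 2) (Fin 2) ℂ)
    (hA1 : ∀ i j : Fin 2, ∀ x ∈ U, DifferentiableAt ℂ (fun y => A y i j) x)
    (hA2 : ∀ i j : Fin 2, ∀ x ∈ U, DifferentiableAt ℂ (deriv (fun y => A y i j)) x)
    (htr : ∀ x ∈ U, (A x).trace = 0)
    (h12 : ∀ x ∈ U, A x 0 1 ≠ 0)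
    (h : ℂ → ℂ)
    (hh1 : ∀ x ∈ U, DifferentiableAt ℂ h x)
    (hh2 : ∀ x ∈ U, DifferentiableAt ℂ (deriv h) x)
    (hsq : ∀ x ∈ U, (h x) ^ 2 = A x 0 1)
    (hne : ∀ x ∈ U, h x ≠ 0)
    (g : ℂ → Matrix (Fin 2) (Fin 2) ℂ)
    (hg : ∀ x, g x =
      !![h x, 0; 0, (h x)⁻¹] *
        !![1, 0; deriv (fun y => A y 0 1) x / (2 * A x 0 1) - A x 0 0, 1])
    (Q : ℂ → ℂ)
    (hQ : ∀ x, Q x =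
      -(A x).det + deriv (fun y => A y 0 0) x
        - A x 0 0 * deriv (fun y => A y 0 1) x / A x 0 1
        + (3 / 4) * (deriv (fun y => A y 0 1) x / A x 0 1) ^ 2
        - deriv (deriv (fun y => A y 0 1)) x / (2 * A x 0 1)) :
    ∀ x ∈ U, IsUnit (g x) ∧
      (g x)⁻¹ * (A x * g x - Matrix.of (fun i j => deriv (fun y => g y i j) x))
        = !![0, 1; Q x, 0] := by
  intro x hx
  have hb0 := h12 x hx
  have hh0 := hne x hx
  have hs := hsq x hx
  have hd : A x 1 1 = - A x 0 0 := by
    have := htr x hx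
    rw [Matrix.trace_fin_two] at this
    linear_combination this
  have gx : ∀ y, g y = !![h y, 0; (h y)⁻¹ * (deriv (fun y => A y 0 1) y / (2 * A y 0 1) - A y 0 0), (h y)⁻¹] := by
    intro y
    rw [hg y]
    ext i j
    fin_cases i <;> fin_cases j <;> simp [Matrix.mul_apply, Fin.sum_univ_two]
  have Hh := (hh1 x hx).hasDerivAt
  have Ha := (hA1 0 0 x hx).hasDerivAt
  have Hb := (hA1 0 1 x hx).hasDerivAt
  have Hb2 := (hA2 0 1 x hx).hasDerivAt
  have hb' : deriv (fun y => A y 0 1) x = 2 * h x * deriv h x := by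
    have e : (fun y => A y 0 1) =ᶠ[nhds x] fun y => h y ^ 2 := by
      filter_upwards [hU.mem_nhds hx] with y hy
      exact (hsq y hy).symm
    rw [e.deriv_eq]
    refine (Hh.pow 2).deriv.trans ?_
    simp
  have Hi := Hh.inv hh0
  have Hc := Hi.mul ((Hb2.div (Hb.const_mul 2) (mul_ne_zero two_ne_zero hb0)).sub Ha)
  have d00 : deriv (fun y => g y 0 0) x = deriv h x := by simp [gx]
  have d01 : deriv (fun y => g y 0 1) x = 0 := by simp [gx]
  have e11 : (fun y => g y 1 1) = h⁻¹ := by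
    funext y
    simp [gx]
  have e10 : (fun y => g y 1 0) = (h⁻¹ * (((deriv fun y => A y 0 1) / fun y => 2 * A y 0 1) - fun y => A y 0 0)) := by
    funext y
    simp [gx]
  have d11 := Hi.deriv
  have d10 := Hc.deriv
  rw [← e11] at d11
  rw [← e10] at d10
  clear e11 e10
  have hdet : (g x).det = 1 := by
    rw [gx, Matrix.det_fin_two_of]
    field_simp
    ring
  have hu : IsUnit (g x).det := by rw [hdet]; exact isUnit_one
  refine ⟨(Matrix.isUnit_iff_isUnit_det _).2 hu, ?_⟩
  have key : A x * g x - Matrix.of (fun i j => deriv (fun y => g y i j) x)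
      = g x * !![0, 1; Q x, 0] := by
    have hQx := hQ x
    rw [Matrix.det_fin_two, hd] at hQx
    simp only [Pi.inv_apply, Pi.div_apply, Pi.sub_apply] at d10 d11
    generalize deriv (deriv (fun y => A y 0 1)) x = b2 at *
    rw [hb', ← hs] at hQx d10
    ext i j
    fin_cases i <;> fin_cases j
    · simp [Matrix.mul_apply, Fin.sum_univ_two, d00]
      simp [gx, hb', ← hs]
      field_simp
      ring
    · simp [Matrix.mul_apply, Fin.sum_univ_two, d01]
      simp [gx, ← hs]
      field_simp
    · simp [Matrix.mul_apply, Fin.sum_univ_two, d10]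
      simp [gx, hb', hd, hQx, ← hs]
      field_simp
      ring
    · simp [Matrix.mul_apply, Fin.sum_univ_two, d11]
      simp [gx, hb', hd, ← hs]
      field_simp
      ring
  rw [key, Matrix.nonsing_inv_mul_cancel_left _ _ hu]
end

section
/- Fix ε ∈ ℂ∖{0}, let U ⊆ ℂ∖{0} be open, and let q, p, r : U → ℂ be differentiable with q(t) ≠ 0 for all t ∈ U. For x ∈ ℂ∖{0} and t ∈ U define the 2×2 matrices A_ε(x,t) = (1/x)·[[r + pq/ε, (1 − q/x)/ε],[(tx − 1/q)/ε, −r − pq/ε]] and B_ε(x,t) = (1/(εt))·[[pq + εr, 1],[0, −(pq + εr)]] + (x/ε)·[[0,0],[1,0]]. Then for t₀ ∈ U the zero-curvature equation ∂_t A_ε(x,t)|_{t=t₀} − ∂_x B_ε(x,t)|_{x,t₀} + [A_ε(x,t₀), B_ε(x,t₀)] = 0 holds for all x ∈ ℂ∖{0} if and only if t₀·q′(t₀) = 2p(t₀)q(t₀)²/ε + 2q(t₀)r(t₀) and t₀·(pq + εr)′(t₀) = (q(t₀)t₀ − q(t₀)⁻¹)/ε. -/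
/- Painlevé III₃: the zero-curvature equation for the pencil of connections holds
   for all x ≠ 0 iff the two isomonodromy equations hold. -/
theorem stmt2
    (ε : ℂ) (hε : ε ≠ 0)
    (U : Set ℂ) (hU : IsOpen U) (hU0 : ∀ t ∈ U, t ≠ 0)
    (q p r : ℂ → ℂ)
    (hq : ∀ t ∈ U, DifferentiableAt ℂ q t)
    (hp : ∀ t ∈ U, DifferentiableAt ℂ p t)
    (hr : ∀ t ∈ U, DifferentiableAt ℂ r t)
    (hqne : ∀ t ∈ U, q t ≠ 0)
    (A B : ℂ → ℂ → Matrix (Fin 2) (Fin 2) ℂ)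
    (hA : ∀ x t, A x t = (1 / x) •
      !![r t + p t * q t / ε, (1 - q t / x) / ε;
         (t * x - 1 / q t) / ε, -(r t + p t * q t / ε)])
    (hB : ∀ x t, B x t = (1 / (ε * t)) •
        !![p t * q t + ε * r t, 1; 0, -(p t * q t + ε * r t)]
      + (x / ε) • !![0, 0; 1, 0])
    (t₀ : ℂ) (ht₀ : t₀ ∈ U) :
    (∀ x : ℂ, x ≠ 0 →
        Matrix.of (fun i j => deriv (fun t => A x t i j) t₀)
          - Matrix.of (fun i j => deriv (fun y => B y t₀ i j) x)
          + (A x t₀ * B x t₀ - B x t₀ * A x t₀) = 0)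
      ↔ (t₀ * deriv q t₀ = 2 * p t₀ * (q t₀) ^ 2 / ε + 2 * q t₀ * r t₀ ∧
         t₀ * deriv (fun t => p t * q t + ε * r t) t₀ = (q t₀ * t₀ - (q t₀)⁻¹) / ε) := by
  have ht : t₀ ≠ 0 := hU0 t₀ ht₀
  have hQ : q t₀ ≠ 0 := hqne t₀ ht₀
  have dq := (hq t₀ ht₀).hasDerivAt
  have dp := (hp t₀ ht₀).hasDerivAt
  have dr := (hr t₀ ht₀).hasDerivAt
  have ds : HasDerivAt (fun t => p t * q t + ε * r t)
      (deriv p t₀ * q t₀ + p t₀ * deriv q t₀ + ε * deriv r t₀) t₀ :=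
    (dp.mul dq).add (dr.const_mul ε)
  have a00 : ∀ x, deriv (fun t => A x t 0 0) t₀ =
      (1 / x) * (deriv r t₀ + (deriv p t₀ * q t₀ + p t₀ * deriv q t₀) / ε) := by
    intro x
    have e : (fun t => A x t 0 0) = fun t => (1 / x) * (r t + p t * q t / ε) := by
      funext t; simp [hA]
    rw [e]
    exact ((dr.add ((dp.mul dq).div_const ε)).const_mul (1 / x)).deriv
  have a11 : ∀ x, deriv (fun t => A x t 1 1) t₀ =
      (1 / x) * (-(deriv r t₀ + (deriv p t₀ * q t₀ + p t₀ * deriv q t₀) / ε)) := by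
    intro x
    have e : (fun t => A x t 1 1) = fun t => (1 / x) * (-(r t + p t * q t / ε)) := by
      funext t; rw [hA]; rfl
    rw [e]
    exact ((dr.add ((dp.mul dq).div_const ε)).neg.const_mul (1 / x)).deriv
  have a01 : ∀ x, deriv (fun t => A x t 0 1) t₀ =
      (1 / x) * ((-(deriv q t₀ / x)) / ε) := by
    intro x
    have e : (fun t => A x t 0 1) = fun t => (1 / x) * ((1 - q t / x) / ε) := by
      funext t; rw [hA]; rfl
    rw [e]
    exact ((((dq.div_const x).const_sub 1).div_const ε).const_mul (1 / x)).deriv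
  have a10 : ∀ x, deriv (fun t => A x t 1 0) t₀ =
      (1 / x) * ((1 * x - (-deriv q t₀ / q t₀ ^ 2)) / ε) := by
    intro x
    have e : (fun t => A x t 1 0) = fun t => (1 / x) * ((t * x - (q t)⁻¹) / ε) := by
      funext t; rw [hA, ← one_div]; rfl
    rw [e]
    exact (((((hasDerivAt_id t₀).mul_const x).sub (dq.inv hQ)).div_const ε).const_mul (1 / x)).deriv
  have b00 : ∀ x, deriv (fun y => B y t₀ 0 0) x = 0 := by
    intro x; simp [hB]
  have b01 : ∀ x, deriv (fun y => B y t₀ 0 1) x = 0 := by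
    intro x; simp [hB]
  have b11 : ∀ x, deriv (fun y => B y t₀ 1 1) x = 0 := by
    intro x; simp [hB]
  have b10 : ∀ x, deriv (fun y => B y t₀ 1 0) x = 1 / ε := by
    intro x; simp [hB]
  rw [ds.deriv]
  have key : ∀ x : ℂ, (Matrix.of (fun i j => deriv (fun t => A x t i j) t₀)
          - Matrix.of (fun i j => deriv (fun y => B y t₀ i j) x)
          + (A x t₀ * B x t₀ - B x t₀ * A x t₀) = 0) ↔ _ := fun x => Matrix.ext_iff.symm
  simp only [key, Fin.forall_fin_two, Matrix.add_apply, Matrix.sub_apply, Matrix.of_apply,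
    Matrix.mul_apply, Fin.sum_univ_two, a00, a01, a10, a11, b00, b01, b10, b11, Matrix.zero_apply]
  simp only [hA, hB, Matrix.add_apply, Matrix.smul_apply, Matrix.of_apply, Matrix.cons_val_zero,
    Matrix.cons_val_one, Matrix.cons_val', Matrix.cons_val_fin_one, smul_eq_mul]
  generalize deriv q t₀ = q' at *
  generalize deriv p t₀ = p' at *
  generalize deriv r t₀ = r' at *
  generalize q t₀ = Q at *
  generalize p t₀ = P at *
  generalize r t₀ = R at *
  constructor
  · intro h
    obtain ⟨⟨h1, h2⟩, -, -⟩ := h 1 one_ne_zero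
    field_simp at h1 h2 ⊢
    constructor
    · linear_combination -h2
    · linear_combination h1
  · rintro ⟨h1, h2⟩ x hx
    field_simp at h1 h2 ⊢
    refine ⟨⟨?_, ?_⟩, ?_, ?_⟩
    · linear_combination x * h2
    · linear_combination -h1
    · linear_combination h1
    · linear_combination -x * h2
end

section
/- Fix ε ∈ ℂ∖{0}, let U ⊆ ℂ∖{0} be open and let q, p, r : U → ℂ be differentiable with q nonvanishing on U. Suppose at a point t ∈ U the equations t·q′(t) = 2pq²/ε + 2qr and t·(pq + εr)′(t) = (qt − q⁻¹)/ε hold. Then the function H(t) := p(t)²q(t)² − t·q(t) − q(t)⁻¹ satisfies H′(t) = (2r − q²t(2r+1))/(tq) − 2pqε·r′(t). -/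
/- Painlevé III₃: evolution of the Hamiltonian H = p²q² − tq − q⁻¹ along the
   isomonodromy equations. -/
theorem stmt3
    (ε : ℂ) (hε : ε ≠ 0)
    (U : Set ℂ) (hU : IsOpen U) (hU0 : ∀ t ∈ U, t ≠ 0)
    (q p r : ℂ → ℂ)
    (hq : ∀ t ∈ U, DifferentiableAt ℂ q t)
    (hp : ∀ t ∈ U, DifferentiableAt ℂ p t)
    (hr : ∀ t ∈ U, DifferentiableAt ℂ r t)
    (hqne : ∀ t ∈ U, q t ≠ 0)
    (t : ℂ) (ht : t ∈ U)
    (h1 : t * deriv q t = 2 * p t * (q t) ^ 2 / ε + 2 * q t * r t)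
    (h2 : t * deriv (fun u => p u * q u + ε * r u) t = (q t * t - (q t)⁻¹) / ε) :
    deriv (fun u => (p u) ^ 2 * (q u) ^ 2 - u * q u - (q u)⁻¹) t
      = (2 * r t - (q t) ^ 2 * t * (2 * r t + 1)) / (t * q t)
        - 2 * p t * q t * ε * deriv r t := by
  have ht0 := hU0 t ht
  have hq0 := hqne t ht
  have Q := (hq t ht).hasDerivAt
  have P := (hp t ht).hasDerivAt
  have R := (hr t ht).hasDerivAt
  have e2 : deriv (fun u => p u * q u + ε * r u) t
      = deriv p t * q t + p t * deriv q t + ε * deriv r t :=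
    ((P.mul Q).add (R.const_mul ε)).deriv
  have e3 : deriv (fun u => (p u) ^ 2 * (q u) ^ 2 - u * q u - (q u)⁻¹) t
      = 2 * p t * q t * (deriv p t * q t + p t * deriv q t)
        - q t - t * deriv q t + deriv q t / (q t) ^ 2 := by
    have H := ((((P.pow 2).mul (Q.pow 2)).sub ((hasDerivAt_id t).mul Q)).sub (Q.inv hq0)).deriv
    refine Eq.trans H ?_
    simp
    ring
  rw [e2] at h2
  rw [e3]
  have hY : deriv p t * q t + p t * deriv q t
      = (q t * t - (q t)⁻¹) / ε / t - ε * deriv r t := by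
    rw [← h2]; field_simp; ring
  have hX : deriv q t = (2 * p t * (q t) ^ 2 / ε + 2 * q t * r t) / t := by
    rw [← h1]; field_simp
  rw [hY, hX]
  field_simp
  ring
end

section
/- Fix ε ∈ ℂ∖{0} and H ∈ ℂ, let U ⊆ ℂ∖{0} be open and connected, and let q, p, r : U → ℂ be differentiable with q and p nonvanishing on U. Suppose that p(t)²q(t)² = t·q(t) + H + q(t)⁻¹ for all t ∈ U, and that t·q′(t) = 2pq²/ε + 2qr and t·r′(t) = (2r − q²t(2r+1))/(2pq²ε) on U. Then q is twice differentiable on U and satisfies the ε-deformed Painlevé III₃ equation q″ = (q′)²/q − q′/t + (1/ε²)·(2q²/t − 2/t²). -/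
/- Painlevé III₃: along the isomonodromy flow w₁ (with the spectral constraint),
   q solves the ε-deformed Painlevé III₃ equation. -/
theorem stmt4
    (ε : ℂ) (hε : ε ≠ 0) (H : ℂ)
    (U : Set ℂ) (hU : IsOpen U) (hUc : IsConnected U) (hU0 : ∀ t ∈ U, t ≠ 0)
    (q p r : ℂ → ℂ)
    (hq : ∀ t ∈ U, DifferentiableAt ℂ q t)
    (hp : ∀ t ∈ U, DifferentiableAt ℂ p t)
    (hr : ∀ t ∈ U, DifferentiableAt ℂ r t)
    (hqne : ∀ t ∈ U, q t ≠ 0)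
    (hpne : ∀ t ∈ U, p t ≠ 0)
    (hspec : ∀ t ∈ U, (p t) ^ 2 * (q t) ^ 2 = t * q t + H + (q t)⁻¹)
    (h1 : ∀ t ∈ U, t * deriv q t = 2 * p t * (q t) ^ 2 / ε + 2 * q t * r t)
    (h2 : ∀ t ∈ U, t * deriv r t
      = (2 * r t - (q t) ^ 2 * t * (2 * r t + 1)) / (2 * p t * (q t) ^ 2 * ε)) :
    ∀ t ∈ U, DifferentiableAt ℂ (deriv q) t ∧
      deriv (deriv q) t = (deriv q t) ^ 2 / q t - deriv q t / t
        + (1 / ε ^ 2) * (2 * (q t) ^ 2 / t - 2 / t ^ 2) := by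
  intro t ht
  have ht0 := hU0 t ht
  have hq0 := hqne t ht
  have hp0 := hpne t ht
  have hmem : U ∈ nhds t := hU.mem_nhds ht
  have dq := (hq t ht).hasDerivAt
  have dp := (hp t ht).hasDerivAt
  have dr := (hr t ht).hasDerivAt
  -- derivative of the spectral constraint, multiplied by q
  have e1 : (fun s => (p s) ^ 2 * (q s) ^ 3) =ᶠ[nhds t]
      (fun s => s * (q s) ^ 2 + H * q s + 1) := by
    filter_upwards [hmem] with s hs
    have h := hspec s hs
    have hqs := hqne s hs
    field_simp at h
    linear_combination h
  have L := (dp.pow 2).mul (dq.pow 3)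
  have R := (((hasDerivAt_id t).mul (dq.pow 2)).add (dq.const_mul H)).add_const 1
  have E := (L.congr_of_eventuallyEq e1.symm).unique R
  have e2 : deriv q =ᶠ[nhds t]
      (fun s => (2 * p s * (q s) ^ 2 / ε + 2 * q s * r s) / s) := by
    filter_upwards [hmem] with s hs
    rw [← h1 s hs, mul_div_cancel_left₀ _ (hU0 s hs)]
  have D := (((((dp.const_mul 2).mul (dq.pow 2)).div_const ε).add
    ((dq.const_mul 2).mul dr)).div (hasDerivAt_id t) ht0)
  have D2 := D.congr_of_eventuallyEq e2
  refine ⟨D2.differentiableAt, ?_⟩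
  rw [D2.deriv]
  have S := hspec t ht
  have A := h1 t ht
  have B := h2 t ht
  simp at E ⊢
  generalize deriv q t = q' at *
  generalize deriv p t = p' at *
  generalize deriv r t = r' at *
  generalize q t = Q at *
  generalize p t = P at *
  generalize r t = V at *
  clear D D2 L R e1 e2 dq dp dr
  have hq' : q' = (2 * P * Q ^ 2 / ε + 2 * Q * V) / t := by
    rw [← A, mul_div_cancel_left₀ _ ht0]
  have hr' : r' = (2 * V - Q ^ 2 * t * (2 * V + 1)) / (2 * P * Q ^ 2 * ε) / t := by
    rw [← B, mul_div_cancel_left₀ _ ht0]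
  have hH : H = P ^ 2 * Q ^ 2 - t * Q - Q⁻¹ := by linear_combination -S
  have hp' : p' = (Q ^ 2 + (2 * t * Q + H - 3 * P ^ 2 * Q ^ 2) * q') / (2 * P * Q ^ 3) := by
    field_simp
    linear_combination E
  rw [hp', hr', hH, hq']
  field_simp
  ring
end

section
/- Fix t ∈ ℂ∖{0}, and let q, p, r ∈ ℂ with q ≠ 0. Set H := p²q² − tq − q⁻¹ and suppose H² − 4t ≠ 0. Define W(q, p, r) = (pq/(6(H² − 4t)))·(tq + (H + 6tq)r + (6H + 12tq)r² + 8p²q²r³). Then W((qt)⁻¹, −tpq², −(r + 1/2)) = W(q, p, r). -/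
/- Painlevé III₃: the Plebański function W is invariant under the involution
   (q, p, r) ↦ ((qt)⁻¹, −tpq², −(r + 1/2)). -/
theorem stmt6 (t : ℂ) (ht : t ≠ 0) (q p r : ℂ) (hq : q ≠ 0)
    (H : ℂ) (hH : H = p ^ 2 * q ^ 2 - t * q - q⁻¹) (hD : H ^ 2 - 4 * t ≠ 0)
    (W : ℂ → ℂ → ℂ → ℂ)
    (hW : ∀ q p r : ℂ, W q p r = (p * q / (6 * (H ^ 2 - 4 * t))) *
      (t * q + (H + 6 * t * q) * r + (6 * H + 12 * t * q) * r ^ 2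
        + 8 * p ^ 2 * q ^ 2 * r ^ 3)) :
    W ((q * t)⁻¹) (-t * p * q ^ 2) (-(r + 1 / 2)) = W q p r := by
  rw [hW, hW]
  have h1 : (-t * p * q ^ 2) * (q * t)⁻¹ = -(p * q) := by
    field_simp
  have h2 : t * (q * t)⁻¹ = q⁻¹ := by
    field_simp
  have h3 : (-t * p * q ^ 2) ^ 2 * ((q * t)⁻¹) ^ 2 = H + t * q + q⁻¹ := by
    rw [← mul_pow, h1, hH]; ring
  have h4 : p ^ 2 * q ^ 2 = H + t * q + q⁻¹ := by
    rw [hH]; ring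
  rw [h1, mul_assoc 6 t, mul_assoc 12 t, h2, mul_assoc 8 ((-t * p * q ^ 2) ^ 2), h3,
    mul_assoc 8 (p ^ 2), h4]
  ring
end

section
/- Fix ε ∈ ℂ∖{0}, t ∈ ℂ∖{0}, H ∈ ℂ, r ∈ ℂ, and q, p ∈ ℂ with q ≠ 0 and p²q² = tq + H + q⁻¹. Let A(x) be the matrix with entries A₁₁(x) = (r + pq/ε)/x, A₁₂(x) = (x − q)/(εx²), A₂₁(x) = (tx − q⁻¹)/(εx), A₂₂(x) = −A₁₁(x). Then for every x ∈ ℂ with x ≠ 0 and x ≠ q one has −det A(x) + A₁₁′(x) − A₁₁(x)·A₁₂′(x)/A₁₂(x) + (3/4)·(A₁₂′(x)/A₁₂(x))² − A₁₂″(x)/(2A₁₂(x)) = ε⁻²Q₀(x) + ε⁻¹Q₁(x) + Q₂(x), where Q₀(x) = t/x + H/x² + 1/x³, Q₁(x) = −pq²/(x²(x − q)) + 2pqr/x², and Q₂(x) = 3/(4(x − q)²) − (x + rq)/(x²(x − q)) + r²/x². -/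
/- Painlevé III₃: the oper potential of the gauge-transformed connection equals
   ε⁻²Q₀(x) + ε⁻¹Q₁(x) + Q₂(x). -/
theorem stmt8
    (ε : ℂ) (hε : ε ≠ 0) (t : ℂ) (ht : t ≠ 0) (H r q p : ℂ)
    (hq : q ≠ 0) (hspec : p ^ 2 * q ^ 2 = t * q + H + q⁻¹)
    (A : ℂ → Matrix (Fin 2) (Fin 2) ℂ)
    (hA : ∀ x : ℂ, A x =
      !![(r + p * q / ε) / x, (x - q) / (ε * x ^ 2);
         (t * x - q⁻¹) / (ε * x), -((r + p * q / ε) / x)]) :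
    ∀ x : ℂ, x ≠ 0 → x ≠ q →
      -(A x).det + deriv (fun y => (r + p * q / ε) / y) x
        - ((r + p * q / ε) / x) * deriv (fun y => (y - q) / (ε * y ^ 2)) x
            / ((x - q) / (ε * x ^ 2))
        + (3 / 4) * (deriv (fun y => (y - q) / (ε * y ^ 2)) x
            / ((x - q) / (ε * x ^ 2))) ^ 2
        - deriv (deriv (fun y => (y - q) / (ε * y ^ 2))) x
            / (2 * ((x - q) / (ε * x ^ 2)))
      = ε⁻¹ ^ 2 * (t / x + H / x ^ 2 + 1 / x ^ 3)
        + ε⁻¹ * (-(p * q ^ 2) / (x ^ 2 * (x - q)) + 2 * p * q * r / x ^ 2)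
        + (3 / (4 * (x - q) ^ 2) - (x + r * q) / (x ^ 2 * (x - q)) + r ^ 2 / x ^ 2) := by
  intro x hx hxq
  have hxq' : x - q ≠ 0 := sub_ne_zero.mpr hxq
  have d1 : deriv (fun y : ℂ => (r + p * q / ε) / y) x = -(r + p * q / ε) / x ^ 2 := by
    have h := (hasDerivAt_const x (r + p * q / ε)).div (hasDerivAt_id x) hx
    refine (HasDerivAt.deriv h).trans ?_
    simp
  have d2 : ∀ y : ℂ, y ≠ 0 → deriv (fun y : ℂ => (y - q) / (ε * y ^ 2)) y
      = (2 * q - y) / (ε * y ^ 3) := by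
    intro y hy
    have h := ((hasDerivAt_id y).sub_const q).div
      (((hasDerivAt_id y).pow 2).const_mul ε) (by simp [hε, hy])
    refine (HasDerivAt.deriv h).trans ?_
    simp
    field_simp
    ring
  have d3 : deriv (deriv (fun y : ℂ => (y - q) / (ε * y ^ 2))) x
      = (2 * x - 6 * q) / (ε * x ^ 4) := by
    have he : deriv (fun y : ℂ => (y - q) / (ε * y ^ 2)) =ᶠ[nhds x]
        fun y => (2 * q - y) / (ε * y ^ 3) := by
      filter_upwards [isOpen_ne.mem_nhds hx] with y hy
      exact d2 y hy
    rw [he.deriv_eq]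
    have h := ((hasDerivAt_id x).const_sub (2 * q)).div
      (((hasDerivAt_id x).pow 3).const_mul ε) (by simp [hε, hx])
    refine (HasDerivAt.deriv h).trans ?_
    simp
    field_simp
    ring
  rw [d1, d2 x hx, d3, hA x, Matrix.det_fin_two_of]
  have hH : H = p ^ 2 * q ^ 2 - t * q - q⁻¹ := by rw [hspec]; ring
  rw [hH]
  field_simp
  ring
end

section
/- Fix ε ∈ ℂ∖{0}, let U ⊆ ℂ∖{0} be open and let q, p : U → ℂ be differentiable with q and p nonvanishing on U. Suppose that on U: t·q′ = 2pq²/ε + 2qr and t·p′ = −(2p²q − t + q⁻²)/ε + r(−4p²q³ + 2q²t − 2)/(2pq³), for some function r : U → ℂ. Then the function H(t) := p(t)²q(t)² − t·q(t) − q(t)⁻¹ satisfies t·H′(t) = −t·q(t) for all t ∈ U. -/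
/- Painlevé III₃: along the flow w₁ − qt·w₂ the Hamiltonian H = p²q² − tq − q⁻¹
   satisfies t·H′ = −tq. -/
theorem stmt9
    (ε : ℂ) (hε : ε ≠ 0)
    (U : Set ℂ) (hU : IsOpen U) (hU0 : ∀ t ∈ U, t ≠ 0)
    (q p : ℂ → ℂ)
    (hq : ∀ t ∈ U, DifferentiableAt ℂ q t)
    (hp : ∀ t ∈ U, DifferentiableAt ℂ p t)
    (hqne : ∀ t ∈ U, q t ≠ 0)
    (hpne : ∀ t ∈ U, p t ≠ 0)
    (r : ℂ → ℂ)
    (h1 : ∀ t ∈ U, t * deriv q t = 2 * p t * (q t) ^ 2 / ε + 2 * q t * r t)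
    (h2 : ∀ t ∈ U, t * deriv p t
      = -(2 * (p t) ^ 2 * q t - t + ((q t) ^ 2)⁻¹) / ε
        + r t * (-4 * (p t) ^ 2 * (q t) ^ 3 + 2 * (q t) ^ 2 * t - 2)
            / (2 * p t * (q t) ^ 3)) :
    ∀ t ∈ U,
      t * deriv (fun u => (p u) ^ 2 * (q u) ^ 2 - u * q u - (q u)⁻¹) t
        = -(t * q t) := by
  intro t ht
  have a := h1 t ht
  have b := h2 t ht
  have Q := hqne t ht
  have P := hpne t ht
  have dq := (hq t ht).hasDerivAt
  have dp := (hp t ht).hasDerivAt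
  have d := (((dp.pow 2).mul (dq.pow 2)).sub ((hasDerivAt_id t).mul dq)).sub (dq.inv Q)
  have e : deriv (fun u => (p u) ^ 2 * (q u) ^ 2 - u * q u - (q u)⁻¹) t
      = 2 * p t * deriv p t * (q t) ^ 2 + (p t) ^ 2 * (2 * q t * deriv q t)
        - (q t + t * deriv q t) + deriv q t * ((q t) ^ 2)⁻¹ := by
    refine HasDerivAt.deriv ?_
    refine HasDerivAt.congr_deriv (f := fun u => (p u) ^ 2 * (q u) ^ 2 - u * q u - (q u)⁻¹) d ?_
    simp
    ring
  rw [e]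
  have k : t * (2 * p t * deriv p t * (q t) ^ 2 + (p t) ^ 2 * (2 * q t * deriv q t)
        - (q t + t * deriv q t) + deriv q t * ((q t) ^ 2)⁻¹)
      = 2 * p t * (q t) ^ 2 * (t * deriv p t)
        + (2 * (p t) ^ 2 * q t - t + ((q t) ^ 2)⁻¹) * (t * deriv q t) - t * q t := by ring
  rw [k, a, b]
  field_simp
  ring
end

section
/- Fix t ∈ ℂ∖{0} and H ∈ ℂ. On Ω = {(q, p, r) ∈ ℂ³ : q ≠ 0, p ≠ 0} define the vector fields V_s(q,p,r) = (2q²p, −t − 2H/q − 3/q², (2r − 2trq² − tq²)/(2pq²)) and V_H(q,p,r) = (0, 0, −1/(2qp)). Then: (a) both V_s and V_H are tangent to the surface Σ = {(q,p,r) ∈ Ω : p²q³ = tq² + Hq + 1}, i.e. the directional derivative of the function p²q³ − tq² − Hq − 1 along each field vanishes at every point of Σ; and (b) the Lie bracket [V_s, V_H](x) := (DV_H)_x·V_s(x) − (DV_s)_x·V_H(x) vanishes at every point x ∈ Σ. -/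
/- Painlevé III₃: the vector fields V_s and V_H are tangent to the spectral
   surface Σ and their Lie bracket vanishes on Σ. -/
theorem stmt10 (t : ℂ) (ht : t ≠ 0) (H : ℂ)
    (Vs VH : ℂ × ℂ × ℂ → ℂ × ℂ × ℂ)
    (hVs : ∀ x : ℂ × ℂ × ℂ, Vs x =
      (2 * x.1 ^ 2 * x.2.1,
       -t - 2 * H / x.1 - 3 / x.1 ^ 2,
       (2 * x.2.2 - 2 * t * x.2.2 * x.1 ^ 2 - t * x.1 ^ 2) / (2 * x.2.1 * x.1 ^ 2)))
    (hVH : ∀ x : ℂ × ℂ × ℂ, VH x = (0, 0, -1 / (2 * x.1 * x.2.1)))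
    (f : ℂ × ℂ × ℂ → ℂ)
    (hf : ∀ x : ℂ × ℂ × ℂ, f x = x.2.1 ^ 2 * x.1 ^ 3 - t * x.1 ^ 2 - H * x.1 - 1) :
    ∀ x : ℂ × ℂ × ℂ, x.1 ≠ 0 → x.2.1 ≠ 0 → f x = 0 →
      (fderiv ℂ f x (Vs x) = 0 ∧ fderiv ℂ f x (VH x) = 0) ∧
      fderiv ℂ VH x (Vs x) - fderiv ℂ Vs x (VH x) = 0 := by
  rintro ⟨q, p, r⟩ hq hp h0
  simp only at hq hp
  have hVs' := funext hVs
  have hVH' := funext hVH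
  have hf' := funext hf
  rw [hf] at h0
  simp only at h0
  have line : ∀ (u a : ℂ), HasDerivAt (fun s : ℂ => u + s * a) a 0 := fun u a => by
    simpa using ((hasDerivAt_id (0:ℂ)).mul_const a).const_add u
  have df : ∀ v : ℂ × ℂ × ℂ, fderiv ℂ f (q, p, r) v =
      2 * p * v.2.1 * q ^ 3 + p ^ 2 * (3 * q ^ 2 * v.1) - t * (2 * q * v.1) - H * v.1 := by
    rintro ⟨a, b, c⟩
    have hd : DifferentiableAt ℂ f (q, p, r) := by rw [hf']; fun_prop
    rw [← hd.lineDeriv_eq_fderiv, lineDeriv, hf']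
    have h := ((((((line p b).pow 2).mul ((line q a).pow 3)).sub
      (((line q a).pow 2).const_mul t)).sub ((line q a).const_mul H)).sub_const 1).deriv
    refine Eq.trans h ?_
    simp
  have dH : fderiv ℂ VH (q, p, r) (Vs (q, p, r)) =
      (0, 0, ((2 * (Vs (q,p,r)).1) * p + 2 * q * (Vs (q,p,r)).2.1) / (2 * q * p) ^ 2) := by
    generalize Vs (q, p, r) = v
    obtain ⟨a, b, c⟩ := v
    have hd : DifferentiableAt ℂ VH (q, p, r) := by
      rw [hVH']
      fun_prop (disch := simp [hq, hp])
    rw [← hd.lineDeriv_eq_fderiv, lineDeriv, hVH']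
    have h := ((hasDerivAt_const (0:ℂ) (0:ℂ)).prodMk ((hasDerivAt_const (0:ℂ) (0:ℂ)).prodMk
      ((hasDerivAt_const (0:ℂ) (-1:ℂ)).div (((line q a).const_mul 2).mul (line p b))
        (by simp [hq, hp])))).deriv
    refine Eq.trans h ?_
    simp
  have ds : ∀ c : ℂ, fderiv ℂ Vs (q, p, r) (0, 0, c) =
      (0, 0, (2 * c - 2 * t * c * q ^ 2) / (2 * p * q ^ 2)) := by
    intro c
    have hd : DifferentiableAt ℂ Vs (q, p, r) := by
      rw [hVs']
      fun_prop (disch := simp [hq, hp])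
    rw [← hd.lineDeriv_eq_fderiv, lineDeriv, hVs']
    have h := ((hasDerivAt_const (0:ℂ) (2 * q ^ 2 * p)).prodMk
      ((hasDerivAt_const (0:ℂ) (-t - 2 * H / q - 3 / q ^ 2)).prodMk
      (((((line r c).const_mul 2).sub
        (((line r c).const_mul (2 * t)).mul_const (q ^ 2))).sub_const (t * q ^ 2)).div_const
          (2 * p * q ^ 2)))).deriv
    refine Eq.trans ?_ h
    simp
  refine ⟨⟨?_, ?_⟩, ?_⟩
  · rw [df, hVs]
    simp only
    field_simp
    linear_combination 6 * p * q * h0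
  · rw [df, hVH]
    simp
  · rw [dH, hVH, ds, hVs]
    simp only [Prod.mk_sub_mk, sub_self, Prod.mk_eq_zero, true_and]
    field_simp
    linear_combination 2 * h0
end

section
/- Fix ε ∈ ℂ∖{0}, let U ⊆ ℂ be open, and let q, p, r, s, α : U → ℂ be differentiable. For x ∈ ℂ and t ∈ U define A_ε(x,t) = [[r + (x² + p − q²)/ε, (x − q)/ε],[−2s − 1 − 2r(x + q) + ((x + q)(t − 2p + 2q²) − 2α)/ε, −r − (x² + p − q²)/ε]] and B_ε(x,t) = [[0, 0],[−r, 0]] + (1/(2ε))·[[q + x, 1],[−2p + 2q² + t, −q − x]]. Then for t₀ ∈ U the zero-curvature equation ∂_t A_ε(x,t)|_{t=t₀} − ∂_x B_ε(x,t)|_{x,t₀} + [A_ε(x,t₀), B_ε(x,t₀)] = 0 holds for all x ∈ ℂ if and only if at t₀: q′ = p/ε + r, (p + εr)′ = (2q³ + tq − α)/ε − s, and (α + εs)′ = 0. -/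
/- Painlevé II: the zero-curvature equation for the pencil of connections holds
   for all x iff the three isomonodromy equations hold. -/
theorem stmt11
    (ε : ℂ) (hε : ε ≠ 0)
    (U : Set ℂ) (hU : IsOpen U)
    (q p r s α : ℂ → ℂ)
    (hq : ∀ t ∈ U, DifferentiableAt ℂ q t)
    (hp : ∀ t ∈ U, DifferentiableAt ℂ p t)
    (hr : ∀ t ∈ U, DifferentiableAt ℂ r t)
    (hs : ∀ t ∈ U, DifferentiableAt ℂ s t)
    (hα : ∀ t ∈ U, DifferentiableAt ℂ α t)
    (A B : ℂ → ℂ → Matrix (Fin 2) (Fin 2) ℂ)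
    (hA : ∀ x t, A x t =
      !![r t + (x ^ 2 + p t - (q t) ^ 2) / ε, (x - q t) / ε;
         -2 * s t - 1 - 2 * r t * (x + q t)
           + ((x + q t) * (t - 2 * p t + 2 * (q t) ^ 2) - 2 * α t) / ε,
         -(r t + (x ^ 2 + p t - (q t) ^ 2) / ε)])
    (hB : ∀ x t, B x t = !![0, 0; -r t, 0]
      + (1 / (2 * ε)) • !![q t + x, 1; -2 * p t + 2 * (q t) ^ 2 + t, -(q t) - x])
    (t₀ : ℂ) (ht₀ : t₀ ∈ U) :
    (∀ x : ℂ,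
        Matrix.of (fun i j => deriv (fun t => A x t i j) t₀)
          - Matrix.of (fun i j => deriv (fun y => B y t₀ i j) x)
          + (A x t₀ * B x t₀ - B x t₀ * A x t₀) = 0)
      ↔ (deriv q t₀ = p t₀ / ε + r t₀ ∧
         deriv (fun t => p t + ε * r t) t₀
           = (2 * (q t₀) ^ 3 + t₀ * q t₀ - α t₀) / ε - s t₀ ∧
         deriv (fun t => α t + ε * s t) t₀ = 0) := by
  have dq := (hq t₀ ht₀).hasDerivAt
  have dp := (hp t₀ ht₀).hasDerivAt
  have dr := (hr t₀ ht₀).hasDerivAt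
  have ds := (hs t₀ ht₀).hasDerivAt
  have da := (hα t₀ ht₀).hasDerivAt
  have e2 : deriv (fun t => p t + ε * r t) t₀ = deriv p t₀ + ε * deriv r t₀ :=
    (dp.add (dr.const_mul ε)).deriv
  have e3 : deriv (fun t => α t + ε * s t) t₀ = deriv α t₀ + ε * deriv s t₀ :=
    (da.add (ds.const_mul ε)).deriv
  rw [e2, e3]
  generalize deriv q t₀ = q' at *
  generalize deriv p t₀ = p' at *
  generalize deriv r t₀ = r' at *
  generalize deriv s t₀ = s' at *
  generalize deriv α t₀ = a' at *
  have hd11 : ∀ x, HasDerivAt (fun t => r t + (x ^ 2 + p t - (q t) ^ 2) / ε)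
      (r' + (p' - 2 * q t₀ * q') / ε) t₀ := by
    intro x
    have h := dr.add (((dp.const_add (x ^ 2)).sub (dq.pow 2)).div_const ε)
    refine h.congr_deriv ?_
    push_cast
    ring
  have A11 : ∀ x, deriv (fun t => A x t 0 0) t₀ = r' + (p' - 2 * q t₀ * q') / ε := by
    intro x
    simpa [hA] using (hd11 x).deriv
  have A22 : ∀ x, deriv (fun t => A x t 1 1) t₀ = -(r' + (p' - 2 * q t₀ * q') / ε) := by
    intro x
    have := (hd11 x).neg.deriv
    simp only [hA]
    exact this
  have A12 : ∀ x, deriv (fun t => A x t 0 1) t₀ = -q' / ε := by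
    intro x
    simp only [hA]
    exact ((dq.const_sub x).div_const ε).deriv
  have A21 : ∀ x, deriv (fun t => A x t 1 0) t₀ = -2 * s' - 2 * r' * (x + q t₀) - 2 * r t₀ * q'
      + (q' * (t₀ - 2 * p t₀ + 2 * (q t₀) ^ 2) + (x + q t₀) * (1 - 2 * p' + 4 * q t₀ * q')
        - 2 * a') / ε := by
    intro x
    simp only [hA]
    have h := (((ds.const_mul (-2)).sub_const 1).sub ((dr.const_mul 2).mul (dq.const_add x))).add
      ((((dq.const_add x).mul (((hasDerivAt_id t₀).sub (dp.const_mul 2)).add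
        ((dq.pow 2).const_mul 2))).sub (da.const_mul 2)).div_const ε)
    refine (h.congr_deriv ?_).deriv
    simp
    ring
  have B11 : ∀ x, deriv (fun y => B y t₀ 0 0) x = 1 / (2 * ε) := by
    intro x
    have h := ((hasDerivAt_id x).const_add (q t₀)).const_mul (1 / (2 * ε))
    simpa [hB] using h.deriv
  have B12 : ∀ x, deriv (fun y => B y t₀ 0 1) x = 0 := by
    intro x
    simp [hB]
  have B21 : ∀ x, deriv (fun y => B y t₀ 1 0) x = 0 := by
    intro x
    simp [hB]
  have B22 : ∀ x, deriv (fun y => B y t₀ 1 1) x = -(1 / (2 * ε)) := by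
    intro x
    have h := ((hasDerivAt_id x).const_sub (-(q t₀))).const_mul (1 / (2 * ε))
    simpa [hB] using h.deriv
  have key : ∀ x, Matrix.of (fun i j => deriv (fun t => A x t i j) t₀)
          - Matrix.of (fun i j => deriv (fun y => B y t₀ i j) x)
          + (A x t₀ * B x t₀ - B x t₀ * A x t₀) =
      !![((p' + ε * r' - ((2 * (q t₀) ^ 3 + t₀ * q t₀ - α t₀) / ε - s t₀))
            - 2 * q t₀ * (q' - (p t₀ / ε + r t₀))) / ε, -(q' - (p t₀ / ε + r t₀)) / ε;
         -2 * (a' + ε * s') / ε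
          + (-2 * r t₀ + (t₀ - 2 * p t₀ + 2 * (q t₀) ^ 2) / ε) * (q' - (p t₀ / ε + r t₀))
          - 2 * (x + q t₀) / ε * ((p' + ε * r' - ((2 * (q t₀) ^ 3 + t₀ * q t₀ - α t₀) / ε - s t₀))
            - 2 * q t₀ * (q' - (p t₀ / ε + r t₀))),
         -(((p' + ε * r' - ((2 * (q t₀) ^ 3 + t₀ * q t₀ - α t₀) / ε - s t₀))
            - 2 * q t₀ * (q' - (p t₀ / ε + r t₀))) / ε)] := by
    intro x
    ext i j
    fin_cases i <;> fin_cases j <;>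
      simp only [Matrix.add_apply, Matrix.sub_apply, Matrix.of_apply, Fin.zero_eta, Fin.mk_one,
        A11, A12, A21, A22, B11, B12, B21, B22, Matrix.mul_apply, Fin.sum_univ_two] <;>
      simp [hA, hB] <;> field_simp <;> ring
  simp only [key]
  constructor
  · intro h
    have h0 := h 0
    have h11 := congrFun (congrFun h0 0) 0
    have h12 := congrFun (congrFun h0 0) 1
    have h21 := congrFun (congrFun h0 1) 0
    simp only [Matrix.of_apply, Matrix.cons_val', Matrix.cons_val_zero, Matrix.cons_val_one,
      Matrix.zero_apply, Matrix.cons_val_fin_one] at h11 h12 h21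
    have E1 : q' - (p t₀ / ε + r t₀) = 0 := by
      rcases div_eq_zero_iff.1 h12 with h | h
      · exact neg_eq_zero.1 h
      · exact absurd h hε
    rw [E1] at h11 h21
    have E2 : p' + ε * r' - ((2 * (q t₀) ^ 3 + t₀ * q t₀ - α t₀) / ε - s t₀) = 0 := by
      rcases div_eq_zero_iff.1 h11 with h | h
      · simpa using h
      · exact absurd h hε
    rw [E2] at h21
    refine ⟨sub_eq_zero.1 E1, sub_eq_zero.1 E2, ?_⟩
    have h3 : -2 * (a' + ε * s') / ε = 0 := by linear_combination h21
    rcases div_eq_zero_iff.1 h3 with h | h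
    · linear_combination (-1 / 2) * h
    · exact absurd h hε
  · rintro ⟨E1, E2, E3⟩ x
    rw [sub_eq_zero.2 E1, sub_eq_zero.2 E2, E3]
    ext i j
    fin_cases i <;> fin_cases j <;> simp
end

section
/- Fix ε ∈ ℂ∖{0} and α, s ∈ ℂ, let U ⊆ ℂ be open and let q, p, r : U → ℂ be differentiable with p nonvanishing on U. Suppose that on U: q′ = r + p/ε, p′ = q²/(2p) + (1/ε + r/p)·(2q³ + tq − α), and r′ = −(1/ε)·(s + q²/(2p) + (r/p)·(2q³ + tq − α)). Then q is twice differentiable on U and satisfies ε²·q″ = 2q³ + qt − (α + εs). -/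
/- Painlevé II: along the isomonodromy flow w₁, q solves the ε-deformed
   Painlevé II equation ε²q″ = 2q³ + qt − (α + εs). -/
theorem stmt13
    (ε : ℂ) (hε : ε ≠ 0) (α s : ℂ)
    (U : Set ℂ) (hU : IsOpen U)
    (q p r : ℂ → ℂ)
    (hq : ∀ t ∈ U, DifferentiableAt ℂ q t)
    (hp : ∀ t ∈ U, DifferentiableAt ℂ p t)
    (hr : ∀ t ∈ U, DifferentiableAt ℂ r t)
    (hpne : ∀ t ∈ U, p t ≠ 0)
    (h1 : ∀ t ∈ U, deriv q t = r t + p t / ε)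
    (h2 : ∀ t ∈ U, deriv p t = (q t) ^ 2 / (2 * p t)
      + (1 / ε + r t / p t) * (2 * (q t) ^ 3 + t * q t - α))
    (h3 : ∀ t ∈ U, deriv r t = -(1 / ε) * (s + (q t) ^ 2 / (2 * p t)
      + (r t / p t) * (2 * (q t) ^ 3 + t * q t - α))) :
    ∀ t ∈ U, DifferentiableAt ℂ (deriv q) t ∧
      ε ^ 2 * deriv (deriv q) t = 2 * (q t) ^ 3 + q t * t - (α + ε * s) := by
  intro t ht
  have hev : deriv q =ᶠ[nhds t] fun x => r x + p x / ε :=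
    Filter.eventuallyEq_of_mem (hU.mem_nhds ht) h1
  have hd : HasDerivAt (deriv q) (deriv r t + deriv p t / ε) t :=
    ((hr t ht).hasDerivAt.add ((hp t ht).hasDerivAt.div_const ε)).congr_of_eventuallyEq hev
  refine ⟨hd.differentiableAt, ?_⟩
  have hpt := hpne t ht
  rw [hd.deriv, h2 t ht, h3 t ht]
  field_simp
  ring
end

section
/- Fix ε ∈ ℂ∖{0} and t, α, H, r, s ∈ ℂ, and let q, p ∈ ℂ with p² = q⁴ + tq² − 2αq + 2H. Let A(x) be the matrix with entries A₁₁(x) = r + (x² + p − q²)/ε, A₁₂(x) = (x − q)/ε, A₂₁(x) = −2s − 1 − 2r(x + q) + ((x + q)(t − 2p + 2q²) − 2α)/ε, A₂₂(x) = −A₁₁(x). Then for every x ∈ ℂ with x ≠ q one has −det A(x) + A₁₁′(x) − A₁₁(x)·A₁₂′(x)/A₁₂(x) + (3/4)·(A₁₂′(x)/A₁₂(x))² − A₁₂″(x)/(2A₁₂(x)) = ε⁻²Q₀(x) + ε⁻¹Q₁(x) + Q₂(x), where Q₀(x) = x⁴ + tx² − 2αx + 2H, Q₁(x) = −p/(x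 − q) + 2pr − 2s(x − q), and Q₂(x) = 3/(4(x − q)²) − r/(x − q) + r². -/
/- Painlevé II: the oper potential of the gauge-transformed connection equals
   ε⁻²Q₀(x) + ε⁻¹Q₁(x) + Q₂(x). -/
theorem stmt14
    (ε : ℂ) (hε : ε ≠ 0) (t α H r s q p : ℂ)
    (hspec : p ^ 2 = q ^ 4 + t * q ^ 2 - 2 * α * q + 2 * H)
    (A : ℂ → Matrix (Fin 2) (Fin 2) ℂ)
    (hA : ∀ x : ℂ, A x =
      !![r + (x ^ 2 + p - q ^ 2) / ε, (x - q) / ε;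
         -2 * s - 1 - 2 * r * (x + q)
           + ((x + q) * (t - 2 * p + 2 * q ^ 2) - 2 * α) / ε,
         -(r + (x ^ 2 + p - q ^ 2) / ε)]) :
    ∀ x : ℂ, x ≠ q →
      -(A x).det + deriv (fun y => r + (y ^ 2 + p - q ^ 2) / ε) x
        - (r + (x ^ 2 + p - q ^ 2) / ε) * deriv (fun y => (y - q) / ε) x
            / ((x - q) / ε)
        + (3 / 4) * (deriv (fun y => (y - q) / ε) x / ((x - q) / ε)) ^ 2
        - deriv (deriv (fun y => (y - q) / ε)) x / (2 * ((x - q) / ε))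
      = ε⁻¹ ^ 2 * (x ^ 4 + t * x ^ 2 - 2 * α * x + 2 * H)
        + ε⁻¹ * (-p / (x - q) + 2 * p * r - 2 * s * (x - q))
        + (3 / (4 * (x - q) ^ 2) - r / (x - q) + r ^ 2) := by
  intro x hx
  have hxq : x - q ≠ 0 := sub_ne_zero.mpr hx
  have d1 : deriv (fun y : ℂ => r + (y ^ 2 + p - q ^ 2) / ε) x = 2 * x / ε := by
    have h := (((((hasDerivAt_id x).pow 2).add_const p).sub_const (q ^ 2)).div_const ε).const_add r
    have h2 := h.deriv
    simpa using h2
  have d2 : deriv (fun y : ℂ => (y - q) / ε) = fun _ => 1 / ε := by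
    funext y
    exact (((hasDerivAt_id y).sub_const q).div_const ε).deriv
  have hH : 2 * H = p ^ 2 - (q ^ 4 + t * q ^ 2 - 2 * α * q) := by
    rw [hspec]; ring
  rw [hA, Matrix.det_fin_two_of, d1, d2, deriv_const, hH]
  field_simp
  ring
end

section
/- Fix t, α ∈ ℂ. On Ω = {(q, p, r, s) ∈ ℂ⁴ : p ≠ 0} define the vector fields V_t(q,p,r,s) = (p, 2q³ + tq − α, −((r/p)(2q³ + tq − α) + s + q²/(2p)), 0), V_H(q,p,r,s) = (0, 0, −1/p, 0), and V_α(q,p,r,s) = (0, 0, q/p, −1). Then: (a) the three Lie brackets [V_t, V_H], [V_t, V_α], [V_H, V_α], defined by [F,G](x) = (DG)_x·F(x) − (DF)_x·G(x), vanish identically on Ω; and (b) V_t is tangent to every level set of the function p² − (q⁴ + tq² − 2αq), i.e. the directional derivative of p² − q⁴ − tq² + 2αq along V_t vanishes identically on Ω. -/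
/- Painlevé II: the vector fields V_t, V_H, V_α pairwise commute on Ω = {p ≠ 0},
   and V_t is tangent to the level sets of p² − q⁴ − tq² + 2αq. -/
theorem stmt15 (t α : ℂ)
    (Vt VH Vα : ℂ × ℂ × ℂ × ℂ → ℂ × ℂ × ℂ × ℂ)
    (hVt : ∀ x : ℂ × ℂ × ℂ × ℂ, Vt x =
      (x.2.1,
       2 * x.1 ^ 3 + t * x.1 - α,
       -((x.2.2.1 / x.2.1) * (2 * x.1 ^ 3 + t * x.1 - α) + x.2.2.2
         + x.1 ^ 2 / (2 * x.2.1)),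
       0))
    (hVH : ∀ x : ℂ × ℂ × ℂ × ℂ, VH x = (0, 0, -1 / x.2.1, 0))
    (hVα : ∀ x : ℂ × ℂ × ℂ × ℂ, Vα x = (0, 0, x.1 / x.2.1, -1))
    (f : ℂ × ℂ × ℂ × ℂ → ℂ)
    (hf : ∀ x : ℂ × ℂ × ℂ × ℂ,
      f x = x.2.1 ^ 2 - x.1 ^ 4 - t * x.1 ^ 2 + 2 * α * x.1) :
    ∀ x : ℂ × ℂ × ℂ × ℂ, x.2.1 ≠ 0 →
      (fderiv ℂ VH x (Vt x) - fderiv ℂ Vt x (VH x) = 0 ∧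
       fderiv ℂ Vα x (Vt x) - fderiv ℂ Vt x (Vα x) = 0 ∧
       fderiv ℂ Vα x (VH x) - fderiv ℂ VH x (Vα x) = 0) ∧
      fderiv ℂ f x (Vt x) = 0 := by
  intro x hx
  have e1 : Vt = _ := funext hVt
  have e2 : VH = _ := funext hVH
  have e3 : Vα = _ := funext hVα
  have e4 : f = _ := funext hf
  have hq : HasFDerivAt (fun x : ℂ × ℂ × ℂ × ℂ => x.1) _ x :=
    (ContinuousLinearMap.fst ℂ ℂ (ℂ × ℂ × ℂ)).hasFDerivAt
  have hp : HasFDerivAt (fun x : ℂ × ℂ × ℂ × ℂ => x.2.1) _ x :=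
    ((ContinuousLinearMap.fst ℂ ℂ (ℂ × ℂ)).comp
      (ContinuousLinearMap.snd ℂ ℂ (ℂ × ℂ × ℂ))).hasFDerivAt
  have hr : HasFDerivAt (fun x : ℂ × ℂ × ℂ × ℂ => x.2.2.1) _ x :=
    ((ContinuousLinearMap.fst ℂ ℂ ℂ).comp ((ContinuousLinearMap.snd ℂ ℂ (ℂ × ℂ)).comp
      (ContinuousLinearMap.snd ℂ ℂ (ℂ × ℂ × ℂ)))).hasFDerivAt
  have hs : HasFDerivAt (fun x : ℂ × ℂ × ℂ × ℂ => x.2.2.2) _ x :=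
    ((ContinuousLinearMap.snd ℂ ℂ ℂ).comp ((ContinuousLinearMap.snd ℂ ℂ (ℂ × ℂ)).comp
      (ContinuousLinearMap.snd ℂ ℂ (ℂ × ℂ × ℂ)))).hasFDerivAt
  have hi : HasFDerivAt (fun x : ℂ × ℂ × ℂ × ℂ => (x.2.1)⁻¹) _ x :=
    (hasDerivAt_inv hx).comp_hasFDerivAt x hp
  have hP := (((hq.pow 3).const_mul 2).fun_add (hq.const_mul t)).sub_const α
  have hc : ∀ c : ℂ, HasFDerivAt (fun _ : ℂ × ℂ × ℂ × ℂ => c) (0 : (ℂ × ℂ × ℂ × ℂ) →L[ℂ] ℂ) x :=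
    fun c => hasFDerivAt_const c x
  have d1 := hp.prodMk (hP.prodMk
    (((((hr.fun_mul hi).fun_mul hP).fun_add hs).fun_add
      ((hq.pow 2).fun_mul (hi.const_mul 2⁻¹))).fun_neg.prodMk (hc 0)))
  have d2 := (hc 0).prodMk ((hc 0).prodMk ((hi.const_mul (-1)).prodMk (hc 0)))
  have d3 := (hc 0).prodMk ((hc 0).prodMk ((hq.fun_mul hi).prodMk (hc (-1))))
  have d4 := (((hp.pow 2).fun_sub (hq.pow 4)).fun_sub
    ((hq.pow 2).const_mul t)).fun_add (hq.const_mul (2 * α))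
  simp only [div_eq_mul_inv, mul_inv] at e1 e2 e3
  rw [← e1] at d1
  rw [← e2] at d2
  rw [← e3] at d3
  rw [← e4] at d4
  rw [d1.fderiv, d2.fderiv, d3.fderiv, d4.fderiv, hVt, hVH, hVα]
  obtain ⟨q, p, r, s⟩ := x
  simp only at hx
  refine ⟨⟨?_, ?_, ?_⟩, ?_⟩ <;> simp [Prod.ext_iff] <;> field_simp <;> ring
end
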